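/- Suppose q ≥ 5. Then for every integer j with 4 ≤ j ≤ q+1, the number A_j^⊥ of codewords of Hamming weight j in the dual code C_{(1,q+1,q^2)}^⊥ is given by A_j^⊥ = ((q²−1)·C(q−1, j−2) / (2j(j−1)q²)) · [ 2(q−1)^{j−1} + (−1)^j ( (j−1)q((j−2)q − 2) + 2 ) ], where C(·,·) denotes the binomial coefficient. -/

import Mathlib

open scoped Classical

/-- The number of indices `i` (with `0 ≤ i ≤ q`) where `V i = s`. -/
noncomputable def occr {n : ℕ} {F : Type} (s : F) (V : Fin n → F) : ℕ :=
  (Finset.filter (fun i => V i = s) Finset.univ).card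

/-- The Hamming weight of a vector: the number of its nonzero entries. -/
noncomputable def hwt {n : ℕ} {F : Type} [Zero F] (V : Fin n → F) : ℕ :=
  (Finset.filter (fun i => V i ≠ 0) Finset.univ).card

/-- The codeword `c(β) = (Tr(β·γ^{(q−1)i}))_{i=0}^{q}` of the irreducible cyclic code
`C_{(q+1,q²)}`. -/
noncomputable def cw (q : ℕ) (F : Type) {K : Type} [Field F] [Field K] [Algebra F K]
    (γ : Kˣ) (β : K) : Fin (q + 1) → F :=
  fun i => Algebra.trace F K (β * (γ : K) ^ (((q : ℤ) - 1) * ((i : ℕ) : ℤ)))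

/-- The cyclic code `C_{(1,q+1,q²)} ⊆ F_q^{q+1}`, consisting of the vectors
`c(α,β)_i = α + Tr(β·γ^{(q−1)i})` for `α ∈ F_q`, `β ∈ F_{q²}`. -/
noncomputable def code (q : ℕ) (F : Type) {K : Type} [Field F] [Fintype F] [Field K]
    [Fintype K] [Algebra F K] (γ : Kˣ) : Finset (Fin (q + 1) → F) :=
  Finset.image (fun p : F × K => fun i : Fin (q + 1) => p.1 + cw q F γ p.2 i) Finset.univ

/-- The dual code `C_{(1,q+1,q²)}^⊥ = {v ∈ F_q^{q+1} : ∑ i, v i · c i = 0 for all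
`c ∈ C_{(1,q+1,q²)}`}`. -/
noncomputable def dualCode (q : ℕ) (F : Type) {K : Type} [Field F] [Fintype F] [Field K]
    [Fintype K] [Algebra F K] (γ : Kˣ) : Finset (Fin (q + 1) → F) :=
  Finset.filter (fun v => ∀ c ∈ code q F γ, ∑ i, v i * c i = 0) Finset.univ


theorem q_subs_sum (P : ℕ → ℚ) {α : Type} [DecidableEq α] (a : α) (T : Finset α) (h : a ∉ T) :
    ∑ S ∈ (insert a T).powerset, (-1 : ℚ) ^ S.card * P S.card
      = ∑ S ∈ T.powerset, (-1 : ℚ) ^ S.card * (P S.card - P (S.card + 1)) := by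
  rw [Finset.sum_powerset_insert h, ← Finset.sum_add_distrib]
  apply Finset.sum_congr rfl
  intro S hS
  rw [Finset.card_insert_of_notMem (fun h' => h (Finset.mem_powerset.1 hS h')), pow_succ]
  ring

theorem h_indep (q : ℕ) (F K : Type) [Field F] [Fintype F] [Field K] [Fintype K] [Algebra F K]
    (hF : Fintype.card F = q) (x y z : K) (hx : x ^ (q+1) = 1) (hy : y ^ (q+1) = 1)
    (hz : z ^ (q+1) = 1) (hxy : x ≠ y) (hxz : x ≠ z) (hyz : y ≠ z) (a b c : F)
    (h1 : a + b + c = 0) (h2 : a • x + b • y + c • z = 0) : b = 0 := by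
  have hx0 : x ≠ 0 := by rintro rfl; simp at hx
  have hy0 : y ≠ 0 := by rintro rfl; simp at hy
  have hz0 : z ≠ 0 := by rintro rfl; simp at hz
  obtain ⟨p, hp⟩ := CharP.exists F
  have := hp
  obtain ⟨n, hpp, hn⟩ := FiniteField.card F p
  have : Fact p.Prime := ⟨hpp⟩
  have : CharP K p := charP_of_injective_algebraMap (algebraMap F K).injective p
  have hqn : q = p ^ (n : ℕ) := by rw [← hF, hn]
  have hadd (u v : K) : (u + v) ^ q = u ^ q + v ^ q := by rw [hqn]; exact add_pow_char_pow u v p n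
  have hs (u : F) : (algebraMap F K u) ^ q = algebraMap F K u := by
    rw [← map_pow, ← hF, FiniteField.pow_card]
  have h3 : (a • x + b • y + c • z) ^ q = 0 := by
    rw [h2]; apply zero_pow; rw [← hF]; exact Fintype.card_ne_zero
  have h1' : algebraMap F K a + algebraMap F K b + algebraMap F K c = 0 := by
    rw [← map_add, ← map_add, h1, map_zero]
  simp only [Algebra.smul_def] at h2 h3
  rw [hadd, hadd, mul_pow, mul_pow, mul_pow, hs, hs, hs] at h3
  have inv {u : K} (hu : u ^ (q+1) = 1) : u ^ q = u⁻¹ := by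
    apply eq_inv_of_mul_eq_one_left; rw [← pow_succ, hu]
  rw [inv hx, inv hy, inv hz] at h3
  field_simp at h3
  have : algebraMap F K b * ((x - y) * (y - z)) = 0 := by
    have hc : algebraMap F K c = - algebraMap F K a - algebraMap F K b := by linear_combination h1'
    rw [hc] at h2 h3
    linear_combination (-y) * h2 - h3
  rcases mul_eq_zero.1 this with h | h
  · simpa using h
  · rcases mul_eq_zero.1 h with h | h
    · exact absurd (sub_eq_zero.1 h) hxy
    · exact absurd (sub_eq_zero.1 h) hyz

noncomputable def gfun (q : ℚ) (m : ℕ) : ℚ :=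
  (q - 1) ^ m / q ^ 3 + (-1) ^ m *
    ((m : ℚ) * (m - 1) / 2 * (1 - 1 / q) - m * (1 - 1 / q ^ 2) + (1 - 1 / q ^ 3))

theorem gfun_sum (q : ℚ) (hq : q ≠ 0) {α : Type} [DecidableEq α] (T : Finset α) :
    ∑ S ∈ T.powerset, gfun q S.card = if T.card ≤ 3 then 1 else q ^ (T.card - 3) := by
  unfold gfun
  rw [Finset.sum_add_distrib, ← Finset.sum_div]
  have h1 : ∑ S ∈ T.powerset, (q - 1) ^ S.card = q ^ T.card := by
    have := Finset.sum_pow_mul_eq_add_pow (q - 1) 1 T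
    simpa using this
  rw [h1]
  set P : ℕ → ℚ := fun m => ((m : ℚ) * (m - 1) / 2 * (1 - 1 / q) - m * (1 - 1 / q ^ 2)
    + (1 - 1 / q ^ 3)) with hP
  change _ + ∑ S ∈ T.powerset, (-1 : ℚ) ^ S.card * P S.card = _
  by_cases h3 : 3 ≤ T.card
  · have h2 : ∑ S ∈ T.powerset, (-1 : ℚ) ^ S.card * P S.card = 0 := by
      obtain ⟨U, hU, hc⟩ := Finset.exists_subset_card_eq h3
      obtain ⟨a, b, c, hab, hac, hbc, rfl⟩ := Finset.card_eq_three.1 hc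
      have : T = insert a (insert b (insert c (T \ {a, b, c}))) := by
        ext i
        have := @hU i
        simp only [Finset.mem_insert, Finset.mem_sdiff, Finset.mem_singleton] at this ⊢
        tauto
      rw [this, q_subs_sum P _ _ (by simp [hab, hac]), 
        q_subs_sum (fun m => P m - P (m+1)) _ _ (by simp [hbc]), 
        q_subs_sum (fun m => P m - P (m+1) - (P (m+1) - P (m+1+1))) _ _ (by simp)]
      apply Finset.sum_eq_zero
      intro S _
      simp only [hP]
      push_cast
      ring
    rw [h2]
    split_ifs with h
    · have : T.card = 3 := by omega
      rw [this]; field_simp; simp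
    · obtain ⟨k, hk⟩ := Nat.exists_eq_add_of_le h3
      rw [hk]
      simp only [Nat.add_sub_cancel_left, pow_add]; field_simp; simp
  · rw [if_pos (by omega)]
    have : T.card = 0 ∨ T.card = 1 ∨ T.card = 2 := by omega
    rcases this with h | h | h
    · rw [Finset.card_eq_zero] at h
      subst h
      simp [hP]
    · obtain ⟨a, rfl⟩ := Finset.card_eq_one.1 h
      rw [← insert_empty_eq, q_subs_sum _ _ _ (by simp)]
      simp [hP]
      field_simp
      ring
    · obtain ⟨a, b, hab, rfl⟩ := Finset.card_eq_two.1 h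
      rw [← insert_empty_eq b, q_subs_sum _ _ _ (by simp [hab]), 
        q_subs_sum (fun m => P m - P (m+1)) _ _ (by simp)]
      simp [hP, hab]
      field_simp
      ring

theorem uniq_sum {α : Type} [DecidableEq α] (e g : Finset α → ℚ)
    (h : ∀ T : Finset α, ∑ S ∈ T.powerset, e S = ∑ S ∈ T.powerset, g S) (T : Finset α) : e T = g T := by
  induction T using Finset.strongInduction with
  | H T ih =>
    have := h T
    rw [← Finset.add_sum_erase _ _ (Finset.mem_powerset_self T),
      ← Finset.add_sum_erase _ g (Finset.mem_powerset_self T)] at this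
    have h2 : ∑ x ∈ T.powerset.erase T, e x = ∑ x ∈ T.powerset.erase T, g x := by
      apply Finset.sum_congr rfl
      intro S hS
      rw [Finset.mem_erase, Finset.mem_powerset] at hS
      exact ih S (Finset.ssubset_iff_subset_ne.2 ⟨hS.2, hS.1⟩)
    linarith

theorem ker_card {ι F V : Type} [Fintype ι] [Field F] [Fintype F]
    [AddCommGroup V] [Module F V] [FiniteDimensional F V] (hV : Module.finrank F V = 3)
    (hι : 3 ≤ Fintype.card ι)
    (h : ι → V) (hh : ∀ U : Finset ι, U.card = 3 → LinearIndependent F (fun i : U => h i))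
    (T : Finset ι) :
    (Finset.univ.filter (fun v : ι → F => ∑ i, v i • h i = 0 ∧
      Finset.univ.filter (fun i => v i ≠ 0) ⊆ T)).card
      = if T.card ≤ 3 then 1 else (Fintype.card F) ^ (T.card - 3) := by
  let φ := Fintype.linearCombination F (fun i : T => h i)
  have hcard : (Finset.univ.filter (fun v : ι → F => ∑ i, v i • h i = 0 ∧
      Finset.univ.filter (fun i => v i ≠ 0) ⊆ T)).card = Fintype.card φ.ker := by
    rw [← Fintype.card_coe]
    apply Fintype.card_congr
    have key (v : ι → F) (hv : ∀ i, i ∉ T → v i = 0) :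
        ∑ i, v i • h i = ∑ i : T, v i • h i := by
      rw [Finset.sum_coe_sort T (fun i => v i • h i)]
      symm
      apply Finset.sum_subset (Finset.subset_univ _)
      intro i _ hi
      rw [hv i hi, zero_smul]
    have h0 (v : ι → F) (hv : Finset.univ.filter (fun i => v i ≠ 0) ⊆ T) (i) (hi : i ∉ T) :
        v i = 0 := by
      by_contra hne
      exact hi (hv (by simp [hne]))
    refine
      { toFun := fun v => ⟨fun i => v.1 i, ?_⟩
        invFun := fun w => ⟨fun i => if hi : i ∈ T then w.1 ⟨i, hi⟩ else 0, ?_⟩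
        left_inv := ?_
        right_inv := ?_ }
    · have := v.2
      rw [Finset.mem_filter] at this
      rw [LinearMap.mem_ker, Fintype.linearCombination_apply, ← key _ (h0 _ this.2.2)]
      exact this.2.1
    · rw [Finset.mem_filter]
      refine ⟨Finset.mem_univ _, ?_, ?_⟩
      · rw [key _ (fun i hi => by simp [hi])]
        have := w.2
        rw [LinearMap.mem_ker, Fintype.linearCombination_apply] at this
        simpa using this
      · intro i hi
        by_contra hn
        simp [hn] at hi
    · intro v
      have := v.2
      rw [Finset.mem_filter] at this
      ext i
      by_cases hi : i ∈ T
      · simp [hi]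
      · simp [hi, h0 _ this.2.2 i hi]
    · intro w
      ext i
      simp
  rw [hcard]
  split_ifs with h3
  · obtain ⟨U, hTU, hU⟩ := Finset.exists_superset_card_eq h3 hι
    have hl : LinearIndependent F (fun i : T => h i) :=
      (hh U hU).comp (fun i : T => (⟨i, hTU i.2⟩ : U)) (fun a b hab => by
        ext; simpa using congrArg (fun z : U => (z : ι)) hab)
    have : φ.ker = ⊥ := by
      rw [LinearMap.ker_eq_bot']
      intro m hm
      rw [Fintype.linearCombination_apply] at hm
      ext i
      exact Fintype.linearIndependent_iff.1 hl m hm i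
    rw [Fintype.card_eq_one_iff]
    refine ⟨0, fun y => ?_⟩
    ext1
    have := y.2
    simpa [‹φ.ker = ⊥›] using this
  · obtain ⟨U, hUT, hU⟩ := Finset.exists_subset_card_eq (le_of_not_ge h3)
    have : Nonempty U := by
      rw [nonempty_subtype]; exact Finset.card_pos.1 (by omega)
    have hs := (hh U hU).span_eq_top_of_card_eq_finrank (by simp [hU, hV])
    have hr : φ.range = ⊤ := by
      rw [Fintype.range_linearCombination, eq_top_iff, ← hs]
      apply Submodule.span_mono
      rintro _ ⟨i, rfl⟩
      exact ⟨⟨i, hUT i.2⟩, rfl⟩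
    have hd := LinearMap.finrank_range_add_finrank_ker φ
    rw [hr, finrank_top, hV] at hd
    simp at hd
    rw [Module.card_eq_pow_finrank (K := F)]
    congr 1
    omega

theorem mds_count {ι F V : Type} [Fintype ι] [Field F] [Fintype F]
    [AddCommGroup V] [Module F V] [FiniteDimensional F V] (hV : Module.finrank F V = 3)
    (hι : 3 ≤ Fintype.card ι)
    (h : ι → V) (hh : ∀ U : Finset ι, U.card = 3 → LinearIndependent F (fun i : U => h i))
    (j : ℕ) :
    ((Finset.univ.filter (fun v : ι → F => ∑ i, v i • h i = 0 ∧
      (Finset.univ.filter (fun i => v i ≠ 0)).card = j)).card : ℚ)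
      = ((Fintype.card ι).choose j : ℚ) * gfun (Fintype.card F) j := by
  let E : Finset ι → ℚ := fun S => ((Finset.univ.filter (fun v : ι → F => ∑ i, v i • h i = 0 ∧
      Finset.univ.filter (fun i => v i ≠ 0) = S)).card : ℚ)
  have hE : ∀ T, E T = gfun (Fintype.card F) T.card := by
    apply uniq_sum E
    intro T
    rw [gfun_sum _ (by exact_mod_cast Fintype.card_ne_zero)]
    have := ker_card hV hι h hh T
    rw [Finset.card_eq_sum_card_fiberwise (t := T.powerset)
      (f := fun v : ι → F => Finset.univ.filter (fun i => v i ≠ 0))] at this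
    · have h2 := congrArg (Nat.cast : ℕ → ℚ) this
      push_cast at h2
      rw [← h2]
      apply Finset.sum_congr rfl
      intro S hS
      simp only [E]
      congr 2
      ext v
      rw [Finset.mem_powerset] at hS
      simp only [Finset.mem_filter, Finset.mem_univ, true_and]
      constructor
      · rintro ⟨a, rfl⟩
        exact ⟨⟨a, hS⟩, rfl⟩
      · rintro ⟨⟨a, _⟩, b⟩
        exact ⟨a, b⟩
    · intro v hv
      simp only [Finset.coe_filter, Finset.mem_univ, true_and, Set.mem_ofPred_eq] at hv
      exact Finset.mem_coe.2 (Finset.mem_powerset.2 hv.2)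
  rw [Finset.card_eq_sum_card_fiberwise (t := Finset.powersetCard j Finset.univ)
      (f := fun v : ι → F => Finset.univ.filter (fun i => v i ≠ 0))]
  · push_cast
    rw [Finset.sum_congr rfl (g := fun _ => gfun (Fintype.card F) j)]
    · simp
    · intro S hS
      have hc := (Finset.mem_powersetCard.1 hS).2
      rw [← hc, ← hE]
      simp only [E]
      congr 2
      ext v
      simp only [Finset.mem_filter, Finset.mem_univ, true_and]
      constructor
      · rintro ⟨⟨a, _⟩, b⟩
        exact ⟨a, b⟩
      · rintro ⟨a, b⟩
        exact ⟨⟨a, by rw [b]⟩, b⟩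
  · intro v hv
    simp only [Finset.coe_filter, Finset.mem_univ, true_and, Set.mem_ofPred_eq] at hv
    exact Finset.mem_coe.2 (Finset.mem_powersetCard.2 ⟨Finset.subset_univ _, hv.2⟩)

theorem mem_dual_iff (q : ℕ) (F K : Type) [Field F] [Fintype F] [Field K] [Fintype K] [Algebra F K]
    (γ : Kˣ) (v : Fin (q+1) → F) :
    v ∈ dualCode q F γ ↔ ∑ i, v i • ((1 : F), (γ : K) ^ (((q : ℤ) - 1) * ((i : ℕ) : ℤ))) = 0 := by
  have : Algebra.IsSeparable F K := inferInstance
  have key (p : F × K) : ∑ i, v i * (p.1 + cw q F γ p.2 i)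
      = p.1 * ∑ i, v i + 
        Algebra.trace F K (p.2 * ∑ i, v i • (γ : K) ^ (((q : ℤ) - 1) * ((i : ℕ) : ℤ))) := by
    simp only [cw, mul_add, Finset.sum_add_distrib, Finset.mul_sum, map_sum, mul_smul_comm,
      map_smul, smul_eq_mul]
    congr 1
    exact Finset.sum_congr rfl (fun i _ => mul_comm _ _)
  have h1 : v ∈ dualCode q F γ ↔ ∀ p : F × K, ∑ i, v i * (p.1 + cw q F γ p.2 i) = 0 := by
    simp only [dualCode, code, Finset.mem_filter, Finset.mem_univ, true_and, Finset.mem_image]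
    constructor
    · intro h p
      exact h _ ⟨p, rfl⟩
    · rintro h _ ⟨p, rfl⟩
      exact h p
  rw [h1, Prod.ext_iff]
  simp only [key, Prod.fst_sum, Prod.snd_sum, Prod.smul_fst, Prod.smul_snd, smul_eq_mul, mul_one,
    Prod.fst_zero, Prod.snd_zero]
  constructor
  · intro h
    refine ⟨by simpa using h (1, 0), ?_⟩
    apply (traceForm_nondegenerate F K).2
    intro y
    have := h (0, y)
    rw [zero_mul, zero_add] at this
    rw [Algebra.traceForm_apply]
    exact this
  · rintro ⟨ha, hb⟩ p
    rw [ha, hb]; simp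

/-- For `q ≥ 5` and `4 ≤ j ≤ q+1`, the number `A_j^⊥` of codewords of Hamming weight `j`
in the dual code `C_{(1,q+1,q²)}^⊥` is
`((q²−1)·C(q−1,j−2) / (2j(j−1)q²)) · [2(q−1)^{j−1} + (−1)^j((j−1)q((j−2)q−2)+2)]`. -/
theorem dual_code_weight_distribution
    (q : ℕ) (F K : Type) [Field F] [Fintype F] [Field K] [Fintype K] [Algebra F K]
    (hF : Fintype.card F = q) (hK : Fintype.card K = q ^ 2)
    (γ : Kˣ) (hγ : ∀ x : Kˣ, x ∈ Subgroup.zpowers γ)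
    (htr : ∀ x : K, algebraMap F K (Algebra.trace F K x) = x + x ^ q)
    (hq5 : 5 ≤ q) (j : ℕ) (hj4 : 4 ≤ j) (hjq : j ≤ q + 1) :
    ((Finset.filter (fun v => hwt v = j) (dualCode q F γ)).card : ℚ)
      = ((q : ℚ) ^ 2 - 1) * ((q - 1).choose (j - 2) : ℚ)
          / (2 * (j : ℚ) * ((j : ℚ) - 1) * (q : ℚ) ^ 2)
        * (2 * ((q : ℚ) - 1) ^ (j - 1)
            + (-1 : ℚ) ^ j * (((j : ℚ) - 1) * q * (((j : ℚ) - 2) * q - 2) + 2)) := by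
  set x : Fin (q+1) → K := fun i => (γ : K) ^ (((q : ℤ) - 1) * ((i : ℕ) : ℤ)) with hxdef
  have hord : orderOf γ = q ^ 2 - 1 := by
    rw [orderOf_eq_card_of_forall_mem_zpowers hγ, Nat.card_units, Nat.card_eq_fintype_card, hK]
  have hx1 : ∀ i, x i ^ (q+1) = 1 := by
    intro i
    have : γ ^ ((((q : ℤ) - 1) * ((i : ℕ) : ℤ)) * ((q + 1 : ℕ) : ℤ)) = 1 := by
      rw [← orderOf_dvd_iff_zpow_eq_one, hord]
      refine ⟨(i : ℕ), ?_⟩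
      rw [Nat.cast_sub (by nlinarith)]
      push_cast; ring
    have h2 := congrArg (Units.val) this
    rw [zpow_mul, zpow_natCast] at h2
    simpa [hxdef] using h2
  have hxi : Function.Injective x := by
    intro a b hab
    have h2 : γ ^ (((q : ℤ) - 1) * ((a : ℕ) : ℤ)) = γ ^ (((q : ℤ) - 1) * ((b : ℕ) : ℤ)) := by
      ext; simpa [hxdef] using hab
    rw [zpow_eq_zpow_iff_modEq, hord, Nat.cast_sub (by nlinarith)] at h2
    have h3 := h2.dvd
    have h4 : ((q : ℤ) - 1) * ((q : ℤ) + 1) ∣ ((q : ℤ) - 1) * (((b : ℕ) : ℤ) - ((a : ℕ) : ℤ)) := by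
      convert h3 using 1
      · push_cast; ring
      · ring
    have h5 := Int.dvd_of_mul_dvd_mul_left (by omega) h4
    have h6 := Int.eq_zero_of_abs_lt_dvd h5 (by rw [abs_lt]; omega)
    ext; omega
  have hfr : Module.finrank F K = 2 := by
    have := Module.card_eq_pow_finrank (K := F) (V := K)
    rw [hK, hF] at this
    exact (Nat.pow_right_injective (by omega : 2 ≤ q) this).symm
  have hV : Module.finrank F (F × K) = 3 := by
    rw [Module.finrank_prod, hfr, Module.finrank_self]
  have hh : ∀ U : Finset (Fin (q+1)), U.card = 3 →
      LinearIndependent F (fun i : U => ((1 : F), x i)) := by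
    intro U hU
    rw [Fintype.linearIndependent_iff]
    intro g hg i
    obtain ⟨a, b, c, hab, hac, hbc, hu⟩ := Finset.card_eq_three.1
      (show (Finset.univ : Finset U).card = 3 by simpa using hU)
    rw [hu] at hg
    have hne : ∀ {s t : U}, s ≠ t → x s ≠ x t := fun hst he => hst (Subtype.ext (hxi he))
    rw [Finset.sum_insert (by simp [hab, hac]), Finset.sum_insert (by simp [hbc]),
      Finset.sum_singleton, Prod.ext_iff] at hg
    simp only [Prod.fst_add, Prod.snd_add, Prod.smul_fst, Prod.smul_snd, smul_eq_mul, mul_one,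
      Prod.fst_zero, Prod.snd_zero] at hg
    obtain ⟨g1, g2⟩ := hg
    have hb := h_indep q F K hF _ _ _ (hx1 a) (hx1 b) (hx1 c) (hne hab) (hne hac) (hne hbc)
      (g a) (g b) (g c) (by linear_combination g1) (by rw [← g2]; abel)
    have ha := h_indep q F K hF _ _ _ (hx1 b) (hx1 a) (hx1 c) (hne hab.symm) (hne hbc) (hne hac)
      (g b) (g a) (g c) (by linear_combination g1) (by rw [← g2]; abel)
    have hc := h_indep q F K hF _ _ _ (hx1 a) (hx1 c) (hx1 b) (hne hac) (hne hab) (hne hbc.symm)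
      (g a) (g c) (g b) (by linear_combination g1) (by rw [← g2]; abel)
    have hi : i ∈ ({a, b, c} : Finset U) := by rw [← hu]; exact Finset.mem_univ _
    simp only [Finset.mem_insert, Finset.mem_singleton] at hi
    rcases hi with rfl | rfl | rfl <;> assumption
  have hm := mds_count (ι := Fin (q+1)) hV (by simp; omega) (fun i => ((1 : F), x i)) hh j
  have hset : Finset.filter (fun v => hwt v = j) (dualCode q F γ) =
      Finset.univ.filter (fun v : Fin (q+1) → F => ∑ i, v i • ((1 : F), x i) = 0 ∧
      (Finset.univ.filter (fun i => v i ≠ 0)).card = j) := by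
    ext v
    rw [Finset.mem_filter, mem_dual_iff]
    simp [hwt, hxdef]
  have hm2 : ((Finset.filter (fun v => hwt v = j) (dualCode q F γ)).card : ℚ)
      = ((Fintype.card (Fin (q+1))).choose j : ℚ) * gfun (Fintype.card F) j := by
    rw [hset, ← hm]
    congr!
  rw [hm2, hF, Fintype.card_fin]
  obtain ⟨k, rfl⟩ : ∃ k, j = k + 2 := ⟨j - 2, by omega⟩
  obtain ⟨r, rfl⟩ : ∃ r, q = r + 1 := ⟨q - 1, by omega⟩
  have c1 := Nat.add_one_mul_choose_eq (r + 1) (k + 1)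
  have c2 := Nat.add_one_mul_choose_eq r k
  have c1' := congrArg (Nat.cast : ℕ → ℚ) c1
  have c2' := congrArg (Nat.cast : ℕ → ℚ) c2
  push_cast at c1' c2'
  have e : (((r + 1 + 1).choose (k + 2) : ℕ) : ℚ)
      = ((r : ℚ) + 2) * (r + 1) * (r.choose k : ℚ) / ((k + 2) * (k + 1)) := by
    rw [eq_div_iff (by positivity)]
    linear_combination (-(k + 1 : ℚ)) * c1' - (r + 2 : ℚ) * c2'
  rw [e]
  unfold gfun
  have hr : (r : ℚ) + 1 ≠ 0 := by positivity
  have hk1 : (k : ℚ) + 1 ≠ 0 := by positivity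
  have hk2 : (k : ℚ) + 2 ≠ 0 := by positivity
  have hk3 : (k : ℚ) + 2 - 1 ≠ 0 := by ring_nf; positivity
  simp only [Nat.add_sub_cancel, show k + 2 - 1 = k + 1 by omega]
  push_cast
  rw [show (k : ℚ) + 2 - 1 = k + 1 by ring]
  simp only [add_sub_cancel_right, pow_succ]
  field_simp
  ring
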